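/- arXiv:1610.03719 — 2 statements merged into one kernel-verified Lean document; each statement's English description precedes it below -/
import Mathlib

section
/- Let q ∈ [1,2), η : [0,T] → ℝ continuous of finite q-variation, and g : ℝ → ℝ Lipschitz and bounded. Then the Young ODE y_t = ξ + ∫_t^T g(y_s) dη_s has a unique continuous solution y of finite q-variation on [0,T], for any ξ ∈ ℝ. -/
open Finset Set

/-- The set of partition sums `(∑ |X_{t_{i+1}} - X_{t_i}|^p)^(1/p)` over partitions of `[s, T]`. -/
def pVarSet (p s T : ℝ) (X : ℝ → ℝ) : Set ℝ :=
  { v | ∃ (n : ℕ) (t : ℕ → ℝ), Monotone t ∧ t 0 = s ∧ (∀ i ≥ n, t i = T) ∧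
      v = (∑ i ∈ Finset.range n, |X (t (i + 1)) - X (t i)| ^ p) ^ (1 / p) }

/-- The `p`-variation of `X` on `[s, T]`. -/
noncomputable def pVar (p s T : ℝ) (X : ℝ → ℝ) : ℝ := sSup (pVarSet p s T X)

/-- `X` has finite `p`-variation on `[s, T]`. -/
def HasFinitePVar (p s T : ℝ) (X : ℝ → ℝ) : Prop := BddAbove (pVarSet p s T X)

/-- Supremum norm of `X` on `[s, T]`. -/
noncomputable def supNorm (s T : ℝ) (X : ℝ → ℝ) : ℝ :=
  sSup ((fun t => |X t|) '' Set.Icc s T)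

/-- `I` is the Young integral `∫_s^T X dY`: the limit of left-point Riemann–Stieltjes sums
over partitions of `[s, T]` as the mesh tends to `0`. -/
def IsYoungIntegral (s T : ℝ) (X Y : ℝ → ℝ) (I : ℝ) : Prop :=
  ∀ ε > 0, ∃ δ > 0, ∀ (n : ℕ) (t : ℕ → ℝ), Monotone t → t 0 = s → (∀ i ≥ n, t i = T) →
    (∀ i < n, t (i + 1) - t i < δ) →
    |(∑ i ∈ Finset.range n, X (t i) * (Y (t (i + 1)) - Y (t i))) - I| < ε

/-! ### The flow of a bounded Lipschitz vector field on the line -/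

theorem exists_solution_Ioo {g : ℝ → ℝ} {L : NNReal} (hg : LipschitzWith L g) {M : ℝ}
    (hgb : ∀ x, |g x| ≤ M) (x R : ℝ) (hR : 0 < R) :
    ∃ α : ℝ → ℝ, α 0 = x ∧ ∀ t ∈ Set.Ioo (-R) R, HasDerivAt α (g (α t)) t := by
  have hM : 0 ≤ M := (abs_nonneg _).trans (hgb 0)
  have hpl : IsPicardLindelof (fun _ => g) (tmin := -R) (tmax := R)
      ⟨0, by constructor <;> linarith⟩ x (⟨M * R, by positivity⟩ : NNReal) 0 ⟨M, hM⟩ L := by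
    refine IsPicardLindelof.of_time_independent (fun y _ => hgb y) hg.lipschitzOnWith ?_
    simp only [sub_zero, zero_sub, neg_neg, max_self, NNReal.coe_zero]
    exact le_rfl
  obtain ⟨α, h0, hα⟩ := hpl.exists_eq_forall_mem_Icc_hasDerivWithinAt₀
  exact ⟨α, h0, fun t ht => (hα t (Set.Ioo_subset_Icc_self ht)).hasDerivAt
    (Icc_mem_nhds ht.1 ht.2)⟩

theorem exists_global_solution {g : ℝ → ℝ} {L : NNReal} (hg : LipschitzWith L g) {M : ℝ}
    (hgb : ∀ x, |g x| ≤ M) (x : ℝ) :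
    ∃ α : ℝ → ℝ, α 0 = x ∧ ∀ t, HasDerivAt α (g (α t)) t := by
  have key := fun n : ℕ => exists_solution_Ioo hg hgb x (n + 1) (by positivity)
  choose α h0 hα using key
  have agree : ∀ m n : ℕ, m ≤ n → Set.EqOn (α m) (α n) (Set.Ioo (-(m + 1)) (m + 1)) := by
    intro m n hmn
    have hmn' : (m : ℝ) ≤ n := by exact_mod_cast hmn
    refine ODE_solution_unique_of_mem_Ioo (v := fun _ => g) (s := fun _ => Set.univ) (K := L)
      (t₀ := 0) (fun _ _ => hg.lipschitzOnWith) ⟨?_, by positivity⟩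
      (fun t ht => ⟨hα m t ht, trivial⟩)
      (fun t ht => ⟨hα n t ⟨by linarith [ht.1], by linarith [ht.2]⟩, trivial⟩)
      ((h0 m).trans (h0 n).symm)
    have : (0 : ℝ) < m + 1 := by positivity
    linarith
  have mem : ∀ t : ℝ, t ∈ Set.Ioo (-((⌈|t|⌉₊ : ℝ) + 1)) ((⌈|t|⌉₊ : ℝ) + 1) := by
    intro t
    have h := Nat.le_ceil |t|
    exact abs_lt.mp (by linarith)
  have glue : ∀ (t : ℝ) (n : ℕ), t ∈ Set.Ioo (-((n : ℝ) + 1)) ((n : ℝ) + 1) →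
      α ⌈|t|⌉₊ t = α n t := by
    intro t n ht
    rcases le_total ⌈|t|⌉₊ n with h | h
    · exact agree _ _ h (mem t)
    · exact (agree _ _ h ht).symm
  refine ⟨fun t => α ⌈|t|⌉₊ t, h0 _, fun t => ?_⟩
  refine (hα _ t (mem t)).congr_of_eventuallyEq ?_
  filter_upwards [Ioo_mem_nhds (mem t).1 (mem t).2] with s hs using glue s _ hs

/-- `φ` is the flow of the autonomous equation `x' = g x`. -/
structure IsFlow (g : ℝ → ℝ) (φ : ℝ → ℝ → ℝ) : Prop where
  zero : ∀ x, φ 0 x = x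
  hasDerivAt : ∀ x u, HasDerivAt (fun u => φ u x) (g (φ u x)) u

namespace IsFlow

variable {g : ℝ → ℝ} {φ : ℝ → ℝ → ℝ} {L : NNReal} {M : ℝ}

theorem add (h : IsFlow g φ) (hg : LipschitzWith L g) (u v x : ℝ) :
    φ (u + v) x = φ u (φ v x) := by
  have := ODE_solution_unique_univ (v := fun _ => g) (s := fun _ => Set.univ) (K := L)
    (f := fun u => φ (u + v) x) (g := fun u => φ u (φ v x)) (t₀ := 0)
    (fun _ => hg.lipschitzOnWith)
    (fun t => ⟨(h.hasDerivAt x (t + v)).comp_add_const t v, trivial⟩)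
    (fun t => ⟨h.hasDerivAt _ t, trivial⟩) (by simp [h.zero])
  exact congrFun this u

theorem abs_sub_le (h : IsFlow g φ) (hgb : ∀ x, |g x| ≤ M) (u v x : ℝ) :
    |φ u x - φ v x| ≤ M * |u - v| :=
  Convex.norm_image_sub_le_of_norm_hasDerivWithin_le (f := fun u => φ u x) (s := Set.univ)
    (fun u _ => (h.hasDerivAt x u).hasDerivWithinAt) (fun _ _ => hgb _) convex_univ
    (Set.mem_univ _) (Set.mem_univ _)

theorem abs_taylor_le (h : IsFlow g φ) (hg : LipschitzWith L g) (hgb : ∀ x, |g x| ≤ M)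
    (u x : ℝ) : |φ u x - x - g x * u| ≤ L * M * u ^ 2 := by
  have hd : ∀ v ∈ Set.Icc (-|u|) |u|, HasDerivWithinAt (fun v => φ v x - g x * v)
      (g (φ v x) - g x * 1) (Set.Icc (-|u|) |u|) v := fun v _ =>
    ((h.hasDerivAt x v).sub ((hasDerivAt_id v).const_mul (g x))).hasDerivWithinAt
  have hM : 0 ≤ M := (abs_nonneg _).trans (hgb 0)
  have hb : ∀ v ∈ Set.Icc (-|u|) |u|, ‖g (φ v x) - g x * 1‖ ≤ L * (M * |u|) := by
    intro v hv
    have h1 := hg.dist_le_mul (φ v x) x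
    have h2 := h.abs_sub_le hgb v 0 x
    rw [h.zero, sub_zero] at h2
    rw [Real.dist_eq, Real.dist_eq] at h1
    rw [mul_one, Real.norm_eq_abs]
    refine h1.trans ?_
    have h3 : |v| ≤ |u| := abs_le.mpr hv
    gcongr
    exact h2.trans (by gcongr)
  have := Convex.norm_image_sub_le_of_norm_hasDerivWithin_le hd hb (convex_Icc _ _)
    (x := 0) (y := u) ⟨by simp, by simp⟩ ⟨neg_abs_le u, le_abs_self u⟩
  simp only [h.zero, Real.norm_eq_abs, sub_zero, mul_zero] at this
  calc |φ u x - x - g x * u| = |φ u x - g x * u - x| := by ring_nf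
    _ ≤ L * (M * |u|) * |u| := this
    _ = L * M * u ^ 2 := by rw [← sq_abs u]; ring

theorem reverse (h : IsFlow g φ) : IsFlow (fun x => -g x) (fun u => φ (-u)) where
  zero x := by simp [h.zero]
  hasDerivAt x u := by
    simpa [Function.comp_def] using (h.hasDerivAt x (-u)).comp u (hasDerivAt_neg u)

theorem abs_sub_le_exp_of_nonneg (h : IsFlow g φ) (hg : LipschitzWith L g) {u : ℝ} (hu : 0 ≤ u)
    (x y : ℝ) : |φ u x - φ u y| ≤ |x - y| * Real.exp (L * u) := by
  have := dist_le_of_trajectories_ODE (v := fun _ => g) (K := L) (f := fun u => φ u x)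
    (g := fun u => φ u y) (a := 0) (b := u) (δ := |x - y|) (fun _ => hg)
    (fun t _ => (h.hasDerivAt x t).continuousAt.continuousWithinAt)
    (fun t _ => (h.hasDerivAt x t).hasDerivWithinAt)
    (fun t _ => (h.hasDerivAt y t).continuousAt.continuousWithinAt)
    (fun t _ => (h.hasDerivAt y t).hasDerivWithinAt)
    (by simp [h.zero, Real.dist_eq]) u ⟨hu, le_rfl⟩
  simpa [Real.dist_eq] using this

theorem abs_sub_le_exp (h : IsFlow g φ) (hg : LipschitzWith L g) (u x y : ℝ) :
    |φ u x - φ u y| ≤ |x - y| * Real.exp (L * |u|) := by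
  rcases le_total 0 u with hu | hu
  · rw [abs_of_nonneg hu]
    exact h.abs_sub_le_exp_of_nonneg hg hu x y
  · rw [abs_of_nonpos hu]
    simpa using h.reverse.abs_sub_le_exp_of_nonneg hg.neg (neg_nonneg.mpr hu) x y

end IsFlow

theorem exists_isFlow {g : ℝ → ℝ} {L : NNReal} (hg : LipschitzWith L g) {M : ℝ}
    (hgb : ∀ x, |g x| ≤ M) : ∃ φ, IsFlow g φ := by
  choose α h0 hα using exists_global_solution hg hgb
  exact ⟨fun u x => α x u, h0, hα⟩

/-! ### Fine partitions and Riemann sums -/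

/-- Partitions of `[a, b]` into finitely many intervals of length less than `δ`. -/
inductive FinePartition (δ : ℝ) : ℝ → ℝ → Type
  | nil (a : ℝ) : FinePartition δ a a
  | cons (a c b : ℝ) (hac : a ≤ c) (hδ : c - a < δ) (p : FinePartition δ c b) :
      FinePartition δ a b

namespace FinePartition

variable {δ δ' a b c : ℝ} {w w' : ℝ → ℝ → ℝ}

/-- The sum of an interval function over the intervals of a partition. -/
def sum (w : ℝ → ℝ → ℝ) {a b : ℝ} : FinePartition δ a b → ℝ
  | nil _ => 0
  | cons a c _ _ _ p => w a c + p.sum w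

theorem le (p : FinePartition δ a b) : a ≤ b := by
  induction p with
  | nil a => exact le_rfl
  | cons a c b hac _ _ ih => exact hac.trans ih

theorem sum_le_sum (p : FinePartition δ a b)
    (h : ∀ c d, a ≤ c → c ≤ d → d ≤ b → d - c < δ → w c d ≤ w' c d) : p.sum w ≤ p.sum w' := by
  induction p with
  | nil a => exact le_rfl
  | cons a c b hac hδ p ih =>
    exact add_le_add (h a c le_rfl hac p.le hδ)
      (ih fun d e hcd => h d e (hac.trans hcd))

theorem sum_congr (p : FinePartition δ a b)
    (h : ∀ c d, a ≤ c → c ≤ d → d ≤ b → d - c < δ → w c d = w' c d) : p.sum w = p.sum w' :=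
  le_antisymm (p.sum_le_sum fun c d h1 h2 h3 h4 => (h c d h1 h2 h3 h4).le)
    (p.sum_le_sum fun c d h1 h2 h3 h4 => (h c d h1 h2 h3 h4).ge)

theorem sum_add (p : FinePartition δ a b) :
    p.sum (fun c d => w c d + w' c d) = p.sum w + p.sum w' := by
  induction p with
  | nil a => simp [sum]
  | cons a c b hac hδ p ih => simp only [sum, ih]; ring

theorem sum_sub (p : FinePartition δ a b) :
    p.sum (fun c d => w c d - w' c d) = p.sum w - p.sum w' := by
  induction p with
  | nil a => simp [sum]
  | cons a c b hac hδ p ih => simp only [sum, ih]; ring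

theorem sum_const_mul (p : FinePartition δ a b) (k : ℝ) :
    p.sum (fun c d => k * w c d) = k * p.sum w := by
  induction p with
  | nil a => simp [sum]
  | cons a c b hac hδ p ih => simp only [sum, ih]; ring

theorem sum_increments (p : FinePartition δ a b) (f : ℝ → ℝ) :
    p.sum (fun c d => f c - f d) = f a - f b := by
  induction p with
  | nil a => simp [sum]
  | cons a c b hac hδ p ih => simp only [sum, ih]; ring

theorem sum_nonneg (p : FinePartition δ a b) (h : ∀ c d, 0 ≤ w c d) : 0 ≤ p.sum w := by
  induction p with
  | nil a => exact le_rfl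
  | cons a c b hac hδ p ih => exact add_nonneg (h a c) ih

theorem abs_sum_le (p : FinePartition δ a b) : |p.sum w| ≤ p.sum fun c d => |w c d| := by
  induction p with
  | nil a => simp [sum]
  | cons a c b hac hδ p ih => exact (abs_add_le _ _).trans (add_le_add le_rfl ih)

/-- Concatenation of partitions. -/
def append {a b c : ℝ} : FinePartition δ a b → FinePartition δ b c → FinePartition δ a c
  | nil _, r => r
  | cons a d _ had hδ p, r => cons a d c had hδ (p.append r)

@[simp]
theorem sum_append (p : FinePartition δ a b) (r : FinePartition δ b c) :
    (p.append r).sum w = p.sum w + r.sum w := by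
  induction p with
  | nil a => simp [sum, append]
  | cons a d b had hδ p ih => simp only [sum, append, ih]; ring

/-- A partition finer than `δ` is finer than any larger `δ'`. -/
def mono (h : δ ≤ δ') {a b : ℝ} : FinePartition δ a b → FinePartition δ' a b
  | nil a => nil a
  | cons a c b hac hδ p => cons a c b hac (hδ.trans_le h) (p.mono h)

@[simp]
theorem sum_mono (h : δ ≤ δ') (p : FinePartition δ a b) : (p.mono h).sum w = p.sum w := by
  induction p with
  | nil a => rfl
  | cons a c b hac hδ p ih => simp only [sum, mono, ih]

theorem nonempty (hδ : 0 < δ) (hab : a ≤ b) : Nonempty (FinePartition δ a b) := by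
  obtain ⟨n, hn⟩ := exists_nat_gt ((b - a) / (δ / 2))
  rw [div_lt_iff₀ (half_pos hδ)] at hn
  induction n generalizing a with
  | zero => norm_num at hn; linarith
  | succ n ih =>
    rcases lt_or_ge (b - a) δ with h | h
    · exact ⟨cons a b b hab h (nil b)⟩
    · push_cast at hn
      obtain ⟨p⟩ := ih (a := a + δ / 2) (by linarith) (by linarith)
      exact ⟨cons a (a + δ / 2) b (by linarith) (by linarith) p⟩

/-- The partition given by a monotone sequence that is eventually constant. -/
theorem exists_of_seq (n : ℕ) (t : ℕ → ℝ) (ht : Monotone t) (hn : ∀ i ≥ n, t i = b)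
    (hδ : ∀ i < n, t (i + 1) - t i < δ) : ∃ p : FinePartition δ (t 0) b,
      ∀ w : ℝ → ℝ → ℝ, p.sum w = ∑ i ∈ Finset.range n, w (t i) (t (i + 1)) := by
  induction n generalizing t with
  | zero =>
    obtain rfl := hn 0 le_rfl
    exact ⟨nil _, fun w => by simp [sum]⟩
  | succ n ih =>
    obtain ⟨p, hp⟩ := ih (fun i => t (i + 1)) (fun i j h => ht (by omega))
      (fun i hi => hn (i + 1) (by omega)) (fun i hi => hδ (i + 1) (by omega))
    refine ⟨cons (t 0) (t 1) b (ht (by omega)) (hδ 0 (by omega)) p, fun w => ?_⟩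
    rw [Finset.sum_range_succ', sum, hp, add_comm]

theorem exists_seq (p : FinePartition δ a b) : ∃ (n : ℕ) (t : ℕ → ℝ), Monotone t ∧ t 0 = a ∧
    (∀ i ≥ n, t i = b) ∧ (∀ i < n, t (i + 1) - t i < δ) ∧
      ∀ w : ℝ → ℝ → ℝ, p.sum w = ∑ i ∈ Finset.range n, w (t i) (t (i + 1)) := by
  induction p with
  | nil a => exact ⟨0, fun _ => a, monotone_const, rfl, fun _ _ => rfl, by simp, by simp [sum]⟩
  | cons a c b hac hδ p ih =>
    obtain ⟨n, t, ht, h0, hn, hm, hs⟩ := ih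
    refine ⟨n + 1, fun i => Nat.casesOn i a t, monotone_nat_of_le_succ ?_, rfl, ?_, ?_, ?_⟩
    · rintro (_ | i)
      · simpa [h0] using hac
      · exact ht (Nat.le_succ i)
    · rintro (_ | i) hi
      · omega
      · exact hn i (by omega)
    · rintro (_ | i) hi
      · simpa [h0] using hδ
      · exact hm i (by omega)
    · intro w
      rw [Finset.sum_range_succ', sum, hs, add_comm]
      simp [h0]

end FinePartition

theorem isYoungIntegral_iff {s T : ℝ} {X Y : ℝ → ℝ} {I : ℝ} :
    IsYoungIntegral s T X Y I ↔ ∀ ε > 0, ∃ δ > 0, ∀ p : FinePartition δ s T,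
      |p.sum (fun c d => X c * (Y d - Y c)) - I| < ε := by
  refine forall₂_congr fun ε hε => exists_congr fun δ => and_congr_right fun hδ => ?_
  constructor
  · intro h p
    obtain ⟨n, t, ht, h0, hn, hm, hs⟩ := p.exists_seq
    rw [hs]
    exact h n t ht h0 hn hm
  · rintro h n t ht rfl hn hm
    obtain ⟨p, hp⟩ := FinePartition.exists_of_seq n t ht hn hm
    rw [← hp (fun c d => X c * (Y d - Y c))]
    exact h p

namespace FinePartition

variable {δ a b A B : ℝ} {w : ℝ → ℝ → ℝ} {Y : ℝ → ℝ}

/-- The intervals of a partition outside a given class can be refined so that their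
contribution to the defect is negligible. -/
theorem exists_sum_near
    (happ : ∀ a b, A ≤ a → a ≤ b → b ≤ B → ∀ e > 0, ∃ p : FinePartition δ a b,
      |p.sum w - (Y a - Y b)| < e)
    (P : ℝ → ℝ → Prop) [∀ c d, Decidable (P c d)] (p : FinePartition δ a b)
    (hA : A ≤ a) (hB : b ≤ B) {e : ℝ} (he : 0 < e) :
    ∃ r : FinePartition δ a b, |r.sum w - (Y a - Y b) -
      p.sum (fun c d => if P c d then w c d - (Y c - Y d) else 0)| < e := by
  induction p generalizing e with
  | nil a => exact ⟨nil a, by simpa [sum] using he⟩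
  | cons a c b hac hδ p ih =>
    obtain ⟨r, hr⟩ := ih (hA.trans hac) hB (half_pos he)
    by_cases hP : P a c
    · refine ⟨cons a c b hac hδ r, ?_⟩
      simp only [sum, if_pos hP]
      calc _ = |r.sum w - (Y c - Y b) -
            p.sum (fun c d => if P c d then w c d - (Y c - Y d) else 0)| := by ring_nf
        _ < e := by linarith
    · obtain ⟨k, hk⟩ := happ a c hA hac (p.le.trans hB) _ (half_pos he)
      refine ⟨k.append r, ?_⟩
      simp only [sum, if_neg hP, sum_append]
      calc _ = |(k.sum w - (Y a - Y c)) + (r.sum w - (Y c - Y b) -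
            p.sum (fun c d => if P c d then w c d - (Y c - Y d) else 0))| := by ring_nf
        _ < e := by linarith [abs_add_le (k.sum w - (Y a - Y c)) (r.sum w - (Y c - Y b) -
            p.sum (fun c d => if P c d then w c d - (Y c - Y d) else 0))]

/-- The Saks–Henstock lemma: a uniform bound on the defect of Riemann sums bounds the
sum of the absolute local defects. -/
theorem sum_abs_defect_le
    (happ : ∀ a b, A ≤ a → a ≤ b → b ≤ B → ∀ e > 0, ∃ p : FinePartition δ a b,
      |p.sum w - (Y a - Y b)| < e)
    {ε : ℝ} (hA : A ≤ a) (hB : b ≤ B)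
    (h : ∀ r : FinePartition δ a b, |r.sum w - (Y a - Y b)| ≤ ε) (p : FinePartition δ a b) :
    p.sum (fun c d => |w c d - (Y c - Y d)|) ≤ 2 * ε := by
  have key : ∀ (P : ℝ → ℝ → Prop) [∀ c d, Decidable (P c d)],
      |p.sum (fun c d => if P c d then w c d - (Y c - Y d) else 0)| ≤ ε := by
    intro P _
    refine le_of_forall_pos_le_add fun e he => ?_
    obtain ⟨r, hr⟩ := exists_sum_near happ P p hA hB he
    have := h r
    rw [abs_le] at this ⊢
    rw [abs_lt] at hr
    constructor <;> linarith
  have hpos := (abs_le.mp (key fun c d => 0 ≤ w c d - (Y c - Y d))).2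
  have hneg := (abs_le.mp (key fun c d => ¬0 ≤ w c d - (Y c - Y d))).1
  calc p.sum (fun c d => |w c d - (Y c - Y d)|)
      = p.sum (fun c d => (if 0 ≤ w c d - (Y c - Y d) then w c d - (Y c - Y d) else 0) -
          if ¬0 ≤ w c d - (Y c - Y d) then w c d - (Y c - Y d) else 0) := by
        refine p.sum_congr fun c d _ _ _ _ => ?_
        by_cases hcd : 0 ≤ w c d - (Y c - Y d)
        · simp only [if_pos hcd, if_neg (not_not.mpr hcd), abs_of_nonneg hcd, sub_zero]
        · simp only [if_neg hcd, if_pos hcd, abs_of_neg (not_le.mp hcd), zero_sub]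
    _ ≤ 2 * ε := by
        rw [sum_sub]
        linarith

end FinePartition

theorem HasFinitePVar.exists_sum_le {q T : ℝ} {η : ℝ → ℝ} (hq : 0 < q)
    (h : HasFinitePVar q 0 T η) :
    ∃ V, 0 ≤ V ∧ ∀ δ > 0, ∀ s, 0 ≤ s → ∀ p : FinePartition δ s T,
      p.sum (fun c d => |η d - η c| ^ q) ≤ V := by
  obtain ⟨C, hC⟩ := h
  refine ⟨|C| ^ q, by positivity, fun δ hδ s hs p => ?_⟩
  obtain ⟨r⟩ := FinePartition.nonempty hδ hs
  have hnn : ∀ c d, 0 ≤ |η d - η c| ^ q := fun c d => by positivity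
  obtain ⟨n, t, ht, h0, hn, -, hsum⟩ := (r.append p).exists_seq
  have hle := hC ⟨n, t, ht, h0, hn, rfl⟩
  rw [← hsum (fun c d => |η d - η c| ^ q), one_div] at hle
  calc p.sum (fun c d => |η d - η c| ^ q)
      ≤ (r.append p).sum (fun c d => |η d - η c| ^ q) := by
        rw [FinePartition.sum_append]
        linarith [r.sum_nonneg hnn]
    _ ≤ |C| ^ q := (Real.rpow_inv_le_iff_of_pos ((r.append p).sum_nonneg hnn)
        (abs_nonneg C) hq).mp (hle.trans (le_abs_self C))

/-- A continuous path of finite `q`-variation with `q < 2` has vanishing quadratic variation. -/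
theorem HasFinitePVar.exists_sum_sq_lt {q T : ℝ} {η : ℝ → ℝ} (hq : 0 < q) (hq2 : q < 2)
    (hη : ContinuousOn η (Set.Icc 0 T)) (h : HasFinitePVar q 0 T η) {ε : ℝ} (hε : 0 < ε) :
    ∃ δ > 0, ∀ s, 0 ≤ s → ∀ p : FinePartition δ s T,
      p.sum (fun c d => (η d - η c) ^ 2) < ε := by
  obtain ⟨V, hV, hsum⟩ := h.exists_sum_le hq
  have h2q : 0 < 2 - q := by linarith
  set κ : ℝ := (ε / (V + 1)) ^ (2 - q)⁻¹ with hκ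
  have hκpos : 0 < κ := by positivity
  have hκq : κ ^ (2 - q) = ε / (V + 1) := Real.rpow_inv_rpow (by positivity) h2q.ne'
  obtain ⟨δ, hδ, hunif⟩ := Metric.uniformContinuousOn_iff.mp
    (isCompact_Icc.uniformContinuousOn_of_continuous hη) κ hκpos
  refine ⟨δ, hδ, fun s hs p => ?_⟩
  calc p.sum (fun c d => (η d - η c) ^ 2)
      ≤ p.sum (fun c d => ε / (V + 1) * |η d - η c| ^ q) := by
        refine p.sum_le_sum fun c d hsc hcd hdT hdδ => ?_
        have hd : |η d - η c| ≤ κ := by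
          have := hunif d ⟨by linarith, hdT⟩ c ⟨by linarith, by linarith⟩
            (by rwa [Real.dist_eq, abs_of_nonneg (by linarith)])
          exact this.le
        have hsplit : (η d - η c) ^ 2 = |η d - η c| ^ (2 - q) * |η d - η c| ^ q := by
          rw [← Real.rpow_add_of_nonneg (abs_nonneg _) h2q.le hq.le, sub_add_cancel,
            Real.rpow_two, sq_abs]
        rw [hsplit, ← hκq]
        gcongr
    _ = ε / (V + 1) * p.sum (fun c d => |η d - η c| ^ q) := p.sum_const_mul _
    _ ≤ ε / (V + 1) * V := by gcongr; exact hsum δ hδ s hs p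
    _ < ε := by
        rw [div_mul_eq_mul_div, div_lt_iff₀ (by positivity)]
        linarith

theorem IsYoungIntegral.exists_sum_near {T : ℝ} {X η Y : ℝ → ℝ} {ξ : ℝ}
    (h : ∀ t ∈ Set.Icc (0 : ℝ) T, IsYoungIntegral t T X η (Y t - ξ)) {δ : ℝ} (hδ : 0 < δ)
    (a b : ℝ) (ha : 0 ≤ a) (hab : a ≤ b) (hb : b ≤ T) (e : ℝ) (he : 0 < e) :
    ∃ p : FinePartition δ a b,
      |p.sum (fun c d => X c * (η d - η c)) - (Y a - Y b)| < e := by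
  obtain ⟨δ₁, hδ₁, h₁⟩ := isYoungIntegral_iff.mp (h a ⟨ha, hab.trans hb⟩) _ (half_pos he)
  obtain ⟨δ₂, hδ₂, h₂⟩ := isYoungIntegral_iff.mp (h b ⟨ha.trans hab, hb⟩) _ (half_pos he)
  have hδ' : 0 < min δ (min δ₁ δ₂) := by positivity
  obtain ⟨p⟩ := FinePartition.nonempty hδ' hab
  obtain ⟨r⟩ := FinePartition.nonempty hδ' hb
  refine ⟨p.mono (min_le_left _ _), ?_⟩
  have hp := h₁ ((p.append r).mono ((min_le_right _ _).trans (min_le_left _ _)))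
  have hr := h₂ (r.mono ((min_le_right _ _).trans (min_le_right _ _)))
  simp only [FinePartition.sum_mono, FinePartition.sum_append] at hp hr ⊢
  rw [abs_lt] at hp hr ⊢
  constructor <;> linarith

theorem IsYoungIntegral.eq_zero_of_self {T : ℝ} {X Y : ℝ → ℝ} {I : ℝ}
    (h : IsYoungIntegral T T X Y I) : I = 0 := by
  by_contra hI
  obtain ⟨δ, _, hp⟩ := isYoungIntegral_iff.mp h |I| (abs_pos.mpr hI)
  simpa [FinePartition.sum] using hp (FinePartition.nil T)

theorem IsFlow.isYoungIntegral {g : ℝ → ℝ} {φ : ℝ → ℝ → ℝ} {L : NNReal} {M q T : ℝ}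
    {η : ℝ → ℝ} (h : IsFlow g φ) (hg : LipschitzWith L g) (hgb : ∀ x, |g x| ≤ M)
    (hq : 0 < q) (hq2 : q < 2) (hη : ContinuousOn η (Set.Icc 0 T))
    (hfη : HasFinitePVar q 0 T η) (ξ t : ℝ) (ht : 0 ≤ t) :
    IsYoungIntegral t T (fun s => g (φ (η T - η s) ξ)) η (φ (η T - η t) ξ - ξ) := by
  have hM : 0 ≤ M := (abs_nonneg _).trans (hgb 0)
  refine isYoungIntegral_iff.mpr fun ε hε => ?_
  obtain ⟨δ, hδ, hsq⟩ := hfη.exists_sum_sq_lt hq hq2 hη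
    (ε := ε / (L * M + 1)) (by positivity)
  refine ⟨δ, hδ, fun p => ?_⟩
  have htel := p.sum_increments fun s => φ (η T - η s) ξ
  simp only [sub_self, h.zero] at htel
  rw [← htel, ← p.sum_sub]
  calc _ ≤ _ := p.abs_sum_le
    _ ≤ p.sum (fun c d => L * M * (η d - η c) ^ 2) := by
        refine p.sum_le_sum fun c d _ _ _ _ => ?_
        have hT := h.abs_taylor_le hg hgb (-(η d - η c)) (φ (η T - η c) ξ)
        rw [← h.add hg] at hT
        rw [neg_sq] at hT
        refine le_trans (le_of_eq ?_) hT
        congr 1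
        ring_nf
    _ = L * M * p.sum (fun c d => (η d - η c) ^ 2) := p.sum_const_mul _
    _ ≤ L * M * (ε / (L * M + 1)) := by gcongr; exact (hsq t ht p).le
    _ < ε := by
        rw [mul_div_assoc', div_lt_iff₀ (by positivity)]
        linarith

theorem HasFinitePVar.of_abs_sub_le {q s T M : ℝ} {η y : ℝ → ℝ} (hq : 0 < q) (hM : 0 ≤ M)
    (h : HasFinitePVar q s T η) (hy : ∀ c d, |y d - y c| ≤ M * |η d - η c|) :
    HasFinitePVar q s T y := by
  obtain ⟨C, hC⟩ := h
  refine ⟨M * C, ?_⟩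
  rintro _ ⟨n, t, ht, h0, hn, rfl⟩
  have hle := hC ⟨n, t, ht, h0, hn, rfl⟩
  calc (∑ i ∈ Finset.range n, |y (t (i + 1)) - y (t i)| ^ q) ^ (1 / q)
      ≤ (∑ i ∈ Finset.range n, (M * |η (t (i + 1)) - η (t i)|) ^ q) ^ (1 / q) := by
        gcongr
        exact hy _ _
    _ = M * (∑ i ∈ Finset.range n, |η (t (i + 1)) - η (t i)| ^ q) ^ (1 / q) := by
        simp_rw [Real.mul_rpow hM (abs_nonneg _), ← Finset.mul_sum]
        rw [Real.mul_rpow (by positivity) (by positivity), one_div,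
          Real.rpow_rpow_inv hM hq.ne']
    _ ≤ M * C := by gcongr

/-- Every solution of the Young equation is the flow evaluated along the driver. -/
theorem IsFlow.eq_of_isYoungIntegral {g : ℝ → ℝ} {φ : ℝ → ℝ → ℝ} {L : NNReal} {M q T : ℝ}
    {η : ℝ → ℝ} (h : IsFlow g φ) (hg : LipschitzWith L g) (hgb : ∀ x, |g x| ≤ M)
    (hq : 0 < q) (hq2 : q < 2) (hη : ContinuousOn η (Set.Icc 0 T))
    (hfη : HasFinitePVar q 0 T η) {ξ : ℝ} {y : ℝ → ℝ}
    (hy : ∀ t ∈ Set.Icc (0 : ℝ) T, IsYoungIntegral t T (fun s => g (y s)) η (y t - ξ))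
    {t : ℝ} (ht : t ∈ Set.Icc (0 : ℝ) T) : y t = φ (η T - η t) ξ := by
  have hM : 0 ≤ M := (abs_nonneg _).trans (hgb 0)
  have hyT : y T = ξ :=
    sub_eq_zero.mp (hy T ⟨ht.1.trans ht.2, le_rfl⟩).eq_zero_of_self
  obtain ⟨K, hK⟩ := isCompact_Icc.exists_bound_of_continuousOn hη
  set E : ℝ := Real.exp (L * (K + K)) with hE
  have hstep : ∀ c d, d ∈ Set.Icc 0 T → |φ (η c - η T) (y c) - φ (η d - η T) (y d)| ≤
      E * (|g (y c) * (η d - η c) - (y c - y d)| + L * M * (η d - η c) ^ 2) := by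
    intro c d hd
    have hdK : |η d - η T| ≤ K + K :=
      (abs_sub _ _).trans (add_le_add (hK d hd) (hK T ⟨ht.1.trans ht.2, le_rfl⟩))
    have hadd := h.add hg (η d - η T) (η c - η d) (y c)
    rw [show η d - η T + (η c - η d) = η c - η T by ring] at hadd
    have hexp : Real.exp (L * |η d - η T|) ≤ E := by rw [hE]; gcongr
    have htay := h.abs_taylor_le hg hgb (η c - η d) (y c)
    have htri : |φ (η c - η d) (y c) - y d| ≤
        |g (y c) * (η d - η c) - (y c - y d)| + L * M * (η d - η c) ^ 2 := by
      have hsplit : φ (η c - η d) (y c) - y d =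
          (φ (η c - η d) (y c) - y c - g (y c) * (η c - η d)) -
            (g (y c) * (η d - η c) - (y c - y d)) := by ring
      rw [hsplit]
      refine (abs_sub _ _).trans ?_
      rw [show (η d - η c) ^ 2 = (η c - η d) ^ 2 by ring]
      linarith
    rw [hadd]
    calc _ ≤ |φ (η c - η d) (y c) - y d| * Real.exp (L * |η d - η T|) :=
          h.abs_sub_le_exp hg _ _ _
      _ ≤ (|g (y c) * (η d - η c) - (y c - y d)| + L * M * (η d - η c) ^ 2) * E := by gcongr
      _ = _ := mul_comm _ _
  have hbound : ∀ ε > 0, |φ (η t - η T) (y t) - ξ| ≤ 0 + E * (2 + L * M) * ε := by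
    intro ε hε
    obtain ⟨δ₁, hδ₁, h₁⟩ := isYoungIntegral_iff.mp (hy t ht) ε hε
    obtain ⟨δ₂, hδ₂, h₂⟩ := hfη.exists_sum_sq_lt hq hq2 hη hε
    obtain ⟨p⟩ := FinePartition.nonempty (lt_min hδ₁ hδ₂) ht.2
    have hdef : p.sum (fun c d => |g (y c) * (η d - η c) - (y c - y d)|) ≤ 2 * ε := by
      rw [← FinePartition.sum_mono (min_le_left δ₁ δ₂)]
      refine FinePartition.sum_abs_defect_le (A := 0) (B := T)
        (w := fun c d => g (y c) * (η d - η c)) (Y := y)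
        (IsYoungIntegral.exists_sum_near hy hδ₁) ht.1 le_rfl (fun r => ?_) _
      rw [hyT]
      exact (h₁ r).le
    have hsq : p.sum (fun c d => (η d - η c) ^ 2) ≤ ε := by
      rw [← FinePartition.sum_mono (min_le_right δ₁ δ₂)]
      exact (h₂ t ht.1 _).le
    have htel := p.sum_increments fun s => φ (η s - η T) (y s)
    simp only [sub_self, h.zero, hyT] at htel
    rw [← htel]
    calc _ ≤ _ := p.abs_sum_le
      _ ≤ p.sum (fun c d => E * (|g (y c) * (η d - η c) - (y c - y d)| +
            L * M * (η d - η c) ^ 2)) := p.sum_le_sum fun c d htc hcd hdT _ =>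
          hstep c d ⟨ht.1.trans (htc.trans hcd), hdT⟩
      _ = E * (p.sum (fun c d => |g (y c) * (η d - η c) - (y c - y d)|) +
            L * M * p.sum (fun c d => (η d - η c) ^ 2)) := by
          rw [p.sum_const_mul, p.sum_add, p.sum_const_mul]
      _ ≤ E * (2 * ε + L * M * ε) := by gcongr
      _ = _ := by ring
  have hzero : φ (η t - η T) (y t) = ξ := by
    refine sub_eq_zero.mp (abs_nonpos_iff.mp (le_of_forall_pos_le_add fun ε hε => ?_))
    have hc : 0 < E * (2 + L * M) := by positivity
    have := hbound (ε / (E * (2 + L * M))) (by positivity)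
    rwa [mul_div_cancel₀ _ hc.ne'] at this
  rw [← hzero, ← h.add hg]
  simp [h.zero]

/-- well-posedness of the backward Young ODE `y_t = ξ + ∫_t^T g(y_s) dη_s`. -/
theorem young_ode_wellposed (T : ℝ) (hT : 0 < T) (q : ℝ) (hq1 : 1 ≤ q) (hq2 : q < 2)
    (η : ℝ → ℝ) (hη : ContinuousOn η (Set.Icc 0 T)) (hfη : HasFinitePVar q 0 T η)
    (g : ℝ → ℝ) (L : NNReal) (hg : LipschitzWith L g) (M : ℝ) (hgb : ∀ x, |g x| ≤ M)
    (ξ : ℝ) :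
    ∃ y : ℝ → ℝ, (ContinuousOn y (Set.Icc 0 T) ∧ HasFinitePVar q 0 T y ∧
        ∀ t ∈ Set.Icc (0 : ℝ) T, IsYoungIntegral t T (fun s => g (y s)) η (y t - ξ)) ∧
      ∀ y' : ℝ → ℝ, (ContinuousOn y' (Set.Icc 0 T) ∧ HasFinitePVar q 0 T y' ∧
          ∀ t ∈ Set.Icc (0 : ℝ) T, IsYoungIntegral t T (fun s => g (y' s)) η (y' t - ξ)) →
        ∀ t ∈ Set.Icc (0 : ℝ) T, y' t = y t := by
  have hq : 0 < q := by linarith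
  have hM : 0 ≤ M := (abs_nonneg _).trans (hgb 0)
  obtain ⟨φ, h⟩ := exists_isFlow hg hgb
  refine ⟨fun t => φ (η T - η t) ξ, ⟨?_, ?_, fun t ht =>
    h.isYoungIntegral hg hgb hq hq2 hη hfη ξ t ht.1⟩, fun y' hy' t ht =>
    h.eq_of_isYoungIntegral hg hgb hq hq2 hη hfη hy'.2.2 ht⟩
  · have hφ : Continuous fun u => φ u ξ :=
      continuous_iff_continuousAt.mpr fun u => (h.hasDerivAt ξ u).continuousAt
    exact hφ.comp_continuousOn (continuousOn_const.sub hη)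
  · refine hfη.of_abs_sub_le hq hM fun c d => (h.abs_sub_le hgb _ _ ξ).trans (le_of_eq ?_)
    rw [sub_sub_sub_cancel_left, abs_sub_comm]
end

section
/- Let q ∈ [1,2), η : [0,T] → ℝ continuous of finite q-variation, α of finite p-variation with 1/p + 1/q > 1, and Γ_t := ∫_0^t α_r dη_r. Let y be a continuous path of finite p-variation satisfying the Young equation dy_t = −α_t y_t dη_t (i.e. y_t = y_0 − ∫_0^t α_r y_r dη_r). Then y_t = y_0 exp(−Γ_t) for all t; in particular if y_0 = 0 then y ≡ 0. -/
open Finset Set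

/-- `S` is a left-point Riemann–Stieltjes sum of `X dY` over a partition of `[a, b]` of mesh less
than `δ`. -/
def IsFineSum (X Y : ℝ → ℝ) (δ a b S : ℝ) : Prop :=
  ∃ (n : ℕ) (t : ℕ → ℝ), Monotone t ∧ t 0 = a ∧ (∀ i ≥ n, t i = b) ∧
    (∀ i < n, t (i + 1) - t i < δ) ∧
    S = ∑ i ∈ Finset.range n, X (t i) * (Y (t (i + 1)) - Y (t i))

/-- The error made when `∫_s^t X dY = F t - F s` is replaced by its left-point approximation. -/
def leftPointError (X Y F : ℝ → ℝ) (s t : ℝ) : ℝ := F t - F s - X s * (Y t - Y s)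

lemma IsFineSum.refl (X Y : ℝ → ℝ) (δ a : ℝ) : IsFineSum X Y δ a a 0 :=
  ⟨0, fun _ => a, monotone_const, rfl, fun _ _ => rfl, by simp, by simp⟩

lemma IsFineSum.single (X Y : ℝ → ℝ) {δ a b : ℝ} (hab : a ≤ b) (h : b - a < δ) :
    IsFineSum X Y δ a b (X a * (Y b - Y a)) := by
  refine ⟨1, fun i => if i = 0 then a else b, ?_, by simp, ?_, ?_, by simp⟩
  · refine monotone_nat_of_le_succ fun i => ?_
    by_cases hi : i = 0 <;> simp [hi, hab]
  · intro i hi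
    simp [Nat.one_le_iff_ne_zero.1 hi]
  · intro i hi
    obtain rfl : i = 0 := by omega
    simpa using h

lemma IsFineSum.mono {X Y : ℝ → ℝ} {δ δ' a b S : ℝ} (h : IsFineSum X Y δ a b S) (hδ : δ ≤ δ') :
    IsFineSum X Y δ' a b S := by
  obtain ⟨n, t, h1, h2, h3, h4, h5⟩ := h
  exact ⟨n, t, h1, h2, h3, fun i hi => (h4 i hi).trans_le hδ, h5⟩

lemma IsFineSum.add {X Y : ℝ → ℝ} {δ a b c S S' : ℝ} (h : IsFineSum X Y δ a b S)
    (h' : IsFineSum X Y δ b c S') : IsFineSum X Y δ a c (S + S') := by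
  obtain ⟨n, t, tmono, t0, tn, tδ, rfl⟩ := h
  obtain ⟨m, u, umono, u0, um, uδ, rfl⟩ := h'
  set v : ℕ → ℝ := fun i => if i ≤ n then t i else u (i - n) with hv
  have vt : ∀ i ≤ n, v i = t i := fun i hi => by simp [hv, hi]
  have vu : ∀ k, v (n + k) = u k := by
    intro k
    rcases Nat.eq_zero_or_pos k with rfl | hk
    · simp [hv, u0, tn n le_rfl]
    · have : ¬ n + k ≤ n := by omega
      simp [hv, this]
  refine ⟨n + m, v, ?_, ?_, ?_, ?_, ?_⟩
  · refine monotone_nat_of_le_succ fun i => ?_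
    rcases lt_or_ge i n with hi | hi
    · rw [vt i hi.le, vt (i + 1) hi]
      exact tmono (Nat.le_succ i)
    · obtain ⟨k, rfl⟩ := Nat.exists_eq_add_of_le hi
      rw [add_assoc, vu, vu]
      exact umono (Nat.le_succ k)
  · rw [vt 0 (Nat.zero_le n), t0]
  · intro i hi
    obtain ⟨k, rfl⟩ := Nat.exists_eq_add_of_le (show n ≤ i by omega)
    rw [vu]
    exact um k (by omega)
  · intro i hi
    rcases lt_or_ge i n with hin | hin
    · rw [vt i hin.le, vt (i + 1) hin]
      exact tδ i hin
    · obtain ⟨k, rfl⟩ := Nat.exists_eq_add_of_le hin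
      rw [add_assoc, vu, vu]
      exact uδ k (by omega)
  · rw [Finset.sum_range_add]
    congr 1
    · refine Finset.sum_congr rfl fun i hi => ?_
      have hi := Finset.mem_range.1 hi
      rw [vt i hi.le, vt (i + 1) hi]
    · refine Finset.sum_congr rfl fun k _ => ?_
      rw [add_assoc, vu, vu]

lemma exists_fine_partition {δ a b : ℝ} (hδ : 0 < δ) (hab : a ≤ b) :
    ∃ (n : ℕ) (t : ℕ → ℝ), Monotone t ∧ t 0 = a ∧ (∀ i ≥ n, t i = b) ∧
      ∀ i < n, t (i + 1) - t i < δ := by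
  obtain ⟨n, hn⟩ := exists_nat_ge ((b - a) / (δ / 2))
  rw [div_le_iff₀ (by positivity)] at hn
  refine ⟨n, fun i => min (a + i * (δ / 2)) b, ?_, by simpa using hab, ?_, ?_⟩
  · intro i j hij
    dsimp only
    gcongr
  · intro i hi
    have : (n : ℝ) ≤ i := by exact_mod_cast hi
    exact min_eq_right (by nlinarith)
  · intro i _
    push_cast
    rcases min_cases (a + (i : ℝ) * (δ / 2)) b with h | h <;>
      rcases min_cases (a + ((i : ℝ) + 1) * (δ / 2)) b with h' | h' <;> nlinarith

lemma exists_isFineSum (X Y : ℝ → ℝ) {δ a b : ℝ} (hδ : 0 < δ) (hab : a ≤ b) :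
    ∃ S, IsFineSum X Y δ a b S := by
  obtain ⟨n, t, h1, h2, h3, h4⟩ := exists_fine_partition hδ hab
  exact ⟨_, n, t, h1, h2, h3, h4, rfl⟩

lemma IsYoungIntegral.exists_isFineSum_bound {X Y : ℝ → ℝ} {s T I ε : ℝ}
    (h : IsYoungIntegral s T X Y I) (hε : 0 < ε) :
    ∃ δ > 0, ∀ S, IsFineSum X Y δ s T S → |S - I| < ε := by
  obtain ⟨δ, hδ, H⟩ := h ε hε
  refine ⟨δ, hδ, ?_⟩
  rintro S ⟨n, t, h1, h2, h3, h4, rfl⟩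
  exact H n t h1 h2 h3 h4

lemma IsYoungIntegral.eq_zero_of_refl {X Y : ℝ → ℝ} {s I : ℝ}
    (h : IsYoungIntegral s s X Y I) : I = 0 := by
  by_contra hI
  obtain ⟨δ, -, H⟩ := h.exists_isFineSum_bound (abs_pos.2 hI)
  simpa using H 0 (IsFineSum.refl X Y δ s)

/-- On subintervals, the increments of the indefinite Young integral are approximated by arbitrarily
fine Riemann–Stieltjes sums. -/
lemma exists_isFineSum_near_increment {X Y F : ℝ → ℝ} {a s t δ ε : ℝ}
    (hs : IsYoungIntegral a s X Y (F s)) (ht : IsYoungIntegral a t X Y (F t))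
    (has : a ≤ s) (hst : s ≤ t) (hδ : 0 < δ) (hε : 0 < ε) :
    ∃ S, IsFineSum X Y δ s t S ∧ |S - (F t - F s)| < ε := by
  obtain ⟨δ₁, hδ₁, H₁⟩ := hs.exists_isFineSum_bound (half_pos hε)
  obtain ⟨δ₂, hδ₂, H₂⟩ := ht.exists_isFineSum_bound (half_pos hε)
  have hm : 0 < min δ (min δ₁ δ₂) := by positivity
  obtain ⟨S₁, hS₁⟩ := exists_isFineSum X Y hm has
  obtain ⟨S₂, hS₂⟩ := exists_isFineSum X Y hm hst
  have e₁ := H₁ S₁ (hS₁.mono ((min_le_right _ _).trans (min_le_left _ _)))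
  have e₂ := H₂ (S₁ + S₂) ((hS₁.add hS₂).mono ((min_le_right _ _).trans (min_le_right _ _)))
  refine ⟨S₂, hS₂.mono (min_le_left _ _), ?_⟩
  rw [abs_lt] at *
  constructor <;> linarith [e₁.1, e₁.2, e₂.1, e₂.2]

lemma exists_isFineSum_chain {X Y F : ℝ → ℝ} {δ : ℝ} {a : ℕ → ℝ} (hmono : Monotone a)
    (J : ℕ → Prop) [DecidablePred J] (n : ℕ) (hJ : ∀ i < n, J i → a (i + 1) - a i < δ)
    (happrox : ∀ ε > 0, ∀ i < n,
      ∃ S, IsFineSum X Y δ (a i) (a (i + 1)) S ∧ |S - (F (a (i + 1)) - F (a i))| < ε) :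
    ∀ ε > 0, ∃ S, IsFineSum X Y δ (a 0) (a n) S ∧
      |S - (F (a n) - F (a 0)) +
        ∑ i ∈ Finset.range n, if J i then leftPointError X Y F (a i) (a (i + 1)) else 0| < ε := by
  induction n with
  | zero => exact fun ε hε => ⟨0, IsFineSum.refl X Y δ _, by simpa using hε⟩
  | succ n ih =>
    intro ε hε
    obtain ⟨S, hS, e⟩ := ih (fun i hi => hJ i (by omega)) (fun ε hε i hi => happrox ε hε i (by omega))
      (ε / 2) (half_pos hε)
    rw [abs_lt] at e
    by_cases hn : J n
    · refine ⟨_, hS.add (IsFineSum.single X Y (hmono (Nat.le_succ n)) (hJ n (by omega) hn)), ?_⟩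
      rw [Finset.sum_range_succ, if_pos hn, abs_lt]
      unfold leftPointError at *
      constructor <;> linarith [e.1, e.2]
    · obtain ⟨S', hS', e'⟩ := happrox (ε / 2) (half_pos hε) n (by omega)
      refine ⟨_, hS.add hS', ?_⟩
      rw [abs_lt] at e'
      rw [Finset.sum_range_succ, if_neg hn, abs_lt]
      constructor <;> linarith [e.1, e.2, e'.1, e'.2]

/-- A Saks–Henstock lemma: the left-point errors over any family of short intervals of a partition
have a small sum. -/
lemma abs_sum_leftPointError_le {X Y F : ℝ → ℝ} {T : ℝ} (hT : 0 ≤ T)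
    (hF : ∀ t ∈ Set.Icc 0 T, IsYoungIntegral 0 t X Y (F t)) {ε : ℝ} (hε : 0 < ε) :
    ∃ δ > 0, ∀ (n : ℕ) (a : ℕ → ℝ), Monotone a → a 0 = 0 → a n = T →
      ∀ (J : ℕ → Prop) [DecidablePred J], (∀ i < n, J i → a (i + 1) - a i < δ) →
        |∑ i ∈ Finset.range n, if J i then leftPointError X Y F (a i) (a (i + 1)) else 0| ≤ ε := by
  obtain ⟨δ, hδ, H⟩ := (hF T ⟨hT, le_rfl⟩).exists_isFineSum_bound (half_pos hε)
  refine ⟨δ, hδ, fun n a hmono h0 hn J _ hJ => ?_⟩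
  have hF0 : F 0 = 0 := (hF 0 ⟨le_rfl, hT⟩).eq_zero_of_refl
  have hmem : ∀ i ≤ n, a i ∈ Set.Icc 0 T := fun i hi =>
    ⟨h0 ▸ hmono (Nat.zero_le i), hn ▸ hmono hi⟩
  obtain ⟨S, hS, e⟩ := exists_isFineSum_chain (X := X) (Y := Y) (F := F) hmono J n hJ
    (fun ε hε i hi => exists_isFineSum_near_increment (hF _ (hmem i hi.le)) (hF _ (hmem (i + 1) hi))
      (hmem i hi.le).1 (hmono (Nat.le_succ i)) hδ hε) (ε / 2) (half_pos hε)
  rw [h0, hn] at hS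
  have e' := H S hS
  rw [h0, hn, hF0] at e
  rw [abs_lt] at e e'
  rw [abs_le]
  constructor <;> linarith [e.1, e.2, e'.1, e'.2]

lemma sum_abs_leftPointError_le {X Y F : ℝ → ℝ} {T : ℝ} (hT : 0 ≤ T)
    (hF : ∀ t ∈ Set.Icc 0 T, IsYoungIntegral 0 t X Y (F t)) {ε : ℝ} (hε : 0 < ε) :
    ∃ δ > 0, ∀ (n : ℕ) (a : ℕ → ℝ), Monotone a → a 0 = 0 → a n = T →
      (∀ i < n, a (i + 1) - a i < δ) →
        ∑ i ∈ Finset.range n, |leftPointError X Y F (a i) (a (i + 1))| ≤ ε := by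
  obtain ⟨δ, hδ, H⟩ := abs_sum_leftPointError_le hT hF (half_pos hε)
  refine ⟨δ, hδ, fun n a hmono h0 hn hmesh => ?_⟩
  have H₁ := (abs_le.1 (H n a hmono h0 hn (fun i => 0 ≤ leftPointError X Y F (a i) (a (i + 1)))
    fun i hi _ => hmesh i hi)).2
  have H₂ := (abs_le.1 (H n a hmono h0 hn (fun i => ¬ 0 ≤ leftPointError X Y F (a i) (a (i + 1)))
    fun i hi _ => hmesh i hi)).1
  have key : ∑ i ∈ Finset.range n, |leftPointError X Y F (a i) (a (i + 1))| =
      (∑ i ∈ Finset.range n, if 0 ≤ leftPointError X Y F (a i) (a (i + 1)) then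
        leftPointError X Y F (a i) (a (i + 1)) else 0) -
      ∑ i ∈ Finset.range n, if ¬ 0 ≤ leftPointError X Y F (a i) (a (i + 1)) then
        leftPointError X Y F (a i) (a (i + 1)) else 0 := by
    rw [← Finset.sum_sub_distrib]
    refine Finset.sum_congr rfl fun i _ => ?_
    by_cases h : 0 ≤ leftPointError X Y F (a i) (a (i + 1))
    · simp [h]
    · simp [h, abs_of_neg (not_le.1 h)]
  linarith

lemma abs_leftPointError_le {X Y F : ℝ → ℝ} {T : ℝ} (hT : 0 ≤ T)
    (hF : ∀ t ∈ Set.Icc 0 T, IsYoungIntegral 0 t X Y (F t)) {ε : ℝ} (hε : 0 < ε) :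
    ∃ δ > 0, ∀ s t, 0 ≤ s → s ≤ t → t ≤ T → t - s < δ → |leftPointError X Y F s t| ≤ ε := by
  obtain ⟨δ, hδ, H⟩ := abs_sum_leftPointError_le hT hF hε
  refine ⟨δ, hδ, fun s t hs hst ht hlt => ?_⟩
  have := H 3 (fun i => if i = 0 then 0 else if i = 1 then s else if i = 2 then t else T)
    (monotone_nat_of_le_succ fun i => by
      rcases i with _ | _ | _ | i <;> simp [*]) (by simp) (by simp) (fun i => i = 1)
    (by rintro i - rfl; simpa using hlt)
  simpa [Finset.sum_range_succ] using this

lemma continuousOn_of_isYoungIntegral {X Y F : ℝ → ℝ} {T A : ℝ} (hT : 0 ≤ T)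
    (hF : ∀ t ∈ Set.Icc 0 T, IsYoungIntegral 0 t X Y (F t))
    (hX : ∀ t ∈ Set.Icc 0 T, |X t| ≤ A) (hY : ContinuousOn Y (Set.Icc 0 T)) :
    ContinuousOn F (Set.Icc 0 T) := by
  have hA : 0 ≤ A := (abs_nonneg _).trans (hX 0 ⟨le_rfl, hT⟩)
  rw [Metric.continuousOn_iff] at hY ⊢
  intro s hs ε hε
  obtain ⟨δ₁, hδ₁, H₁⟩ := abs_leftPointError_le hT hF (half_pos hε)
  obtain ⟨δ₂, hδ₂, H₂⟩ := hY s hs (ε / (2 * (A + 1))) (by positivity)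
  refine ⟨min δ₁ δ₂, by positivity, fun t ht hts => ?_⟩
  have hY' := H₂ t ht (hts.trans_le (min_le_right _ _))
  have hd := hts.trans_le (min_le_left δ₁ δ₂)
  rw [Real.dist_eq] at *
  have hA' : A * |Y t - Y s| < ε / 2 := by
    calc A * |Y t - Y s| ≤ A * (ε / (2 * (A + 1))) := by gcongr
      _ = (A / (A + 1)) * (ε / 2) := by field_simp
      _ < 1 * (ε / 2) := by
        gcongr
        rw [div_lt_one (by positivity)]
        linarith
      _ = ε / 2 := one_mul _
  have step : ∀ u v, u ∈ Set.Icc 0 T → v ∈ Set.Icc 0 T → u ≤ v → v - u < δ₁ →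
      |F v - F u| ≤ ε / 2 + A * |Y v - Y u| := by
    intro u v hu hv huv hlt
    have h := H₁ u v hu.1 huv hv.2 hlt
    calc |F v - F u| = |leftPointError X Y F u v + X u * (Y v - Y u)| := by
          unfold leftPointError; ring_nf
      _ ≤ |leftPointError X Y F u v| + |X u| * |Y v - Y u| := by
          rw [← abs_mul]; exact abs_add_le _ _
      _ ≤ _ := by gcongr; exact hX u hu
  rcases le_total s t with h | h
  · have := step s t hs ht h (lt_of_abs_lt hd)
    linarith
  · have := step t s ht hs h (by rw [abs_sub_comm] at hd; exact lt_of_abs_lt hd)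
    rw [abs_sub_comm (F t), abs_sub_comm (Y t)] at *
    linarith

lemma HasFinitePVar.of_le {p s τ T : ℝ} {X : ℝ → ℝ} (hp : 0 ≤ p) (hτ : τ ≤ T)
    (h : HasFinitePVar p s T X) : HasFinitePVar p s τ X := by
  obtain ⟨M, hM⟩ := h
  refine ⟨M, ?_⟩
  rintro v ⟨n, t, tmono, t0, tn, rfl⟩
  have key := hM ⟨n + 1, fun i => if i ≤ n then t i else T, monotone_nat_of_le_succ fun i => ?_,
    by simpa using t0, fun i hi => by simp [show ¬ i ≤ n by omega], rfl⟩
  · refine le_trans ?_ key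
    rw [Finset.sum_range_succ]
    refine Real.rpow_le_rpow (Finset.sum_nonneg fun i _ => by positivity) ?_ (by positivity)
    refine le_trans (Finset.sum_le_sum fun i hi => ?_) (le_add_of_nonneg_right (by positivity))
    have hi := Finset.mem_range.1 hi
    simp [hi.le, Nat.succ_le_of_lt hi]
  · rcases lt_trichotomy i n with hi | rfl | hi
    · simpa [hi.le, Nat.succ_le_of_lt hi] using tmono (Nat.le_succ i)
    · simpa [tn i le_rfl] using hτ
    · simp [show ¬ i ≤ n by omega, show ¬ i + 1 ≤ n by omega]

/-- A continuous path of finite `q`-variation, `q < 2`, has vanishing quadratic variation. -/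
lemma sum_sq_increments_le {X : ℝ → ℝ} {q T : ℝ} (hq0 : 0 < q) (hq2 : q < 2)
    (hX : ContinuousOn X (Set.Icc 0 T)) (h : HasFinitePVar q 0 T X) {ε : ℝ} (hε : 0 < ε) :
    ∃ δ > 0, ∀ (n : ℕ) (t : ℕ → ℝ), Monotone t → t 0 = 0 → (∀ i ≥ n, t i = T) →
      (∀ i < n, t (i + 1) - t i < δ) →
        ∑ i ∈ Finset.range n, (X (t (i + 1)) - X (t i)) ^ 2 ≤ ε := by
  obtain ⟨M, hM⟩ := h
  set K : ℝ := |M| ^ q + 1 with hK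
  have hKpos : 0 < K := by positivity
  set c : ℝ := (ε / K) ^ (1 / (2 - q)) with hc
  have hq2' : 0 < 2 - q := by linarith
  have hcpos : 0 < c := by positivity
  have hcK : c ^ (2 - q) = ε / K := by
    rw [hc, ← Real.rpow_mul (by positivity), one_div, inv_mul_cancel₀ hq2'.ne', Real.rpow_one]
  obtain ⟨δ, hδ, H⟩ := Metric.uniformContinuousOn_iff.1
    (isCompact_Icc.uniformContinuousOn_of_continuous hX) c hcpos
  refine ⟨δ, hδ, fun n t tmono t0 tn tδ => ?_⟩
  have hmem : ∀ i, t i ∈ Set.Icc 0 T := fun i =>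
    ⟨t0 ▸ tmono (Nat.zero_le i), by
      rw [← tn (max i n) (le_max_right _ _)]; exact tmono (le_max_left _ _)⟩
  have hsum : ∑ i ∈ Finset.range n, |X (t (i + 1)) - X (t i)| ^ q ≤ K := by
    have h1 := hM ⟨n, t, tmono, t0, tn, rfl⟩
    have h0 : 0 ≤ ∑ i ∈ Finset.range n, |X (t (i + 1)) - X (t i)| ^ q :=
      Finset.sum_nonneg fun i _ => by positivity
    have h2 := Real.rpow_le_rpow (by positivity) (h1.trans (le_abs_self M)) hq0.le
    rw [← Real.rpow_mul h0, one_div, inv_mul_cancel₀ hq0.ne', Real.rpow_one] at h2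
    linarith
  calc ∑ i ∈ Finset.range n, (X (t (i + 1)) - X (t i)) ^ 2
      ≤ ∑ i ∈ Finset.range n, ε / K * |X (t (i + 1)) - X (t i)| ^ q := by
        refine Finset.sum_le_sum fun i hi => ?_
        have hd : |X (t (i + 1)) - X (t i)| ≤ c := by
          have := H (t (i + 1)) (hmem _) (t i) (hmem _) (by
            rw [Real.dist_eq, abs_of_nonneg (sub_nonneg.2 (tmono (Nat.le_succ i)))]
            exact tδ i (Finset.mem_range.1 hi))
          rw [Real.dist_eq] at this
          exact this.le
        rw [← sq_abs]
        rcases (abs_nonneg (X (t (i + 1)) - X (t i))).eq_or_lt with h0 | h0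
        · rw [← h0]
          simp [Real.zero_rpow hq0.ne']
        · calc |X (t (i + 1)) - X (t i)| ^ 2
              = |X (t (i + 1)) - X (t i)| ^ (2 - q) * |X (t (i + 1)) - X (t i)| ^ q := by
                rw [← Real.rpow_add h0, sub_add_cancel, Real.rpow_two]
            _ ≤ c ^ (2 - q) * |X (t (i + 1)) - X (t i)| ^ q := by gcongr
            _ = _ := by rw [hcK]
    _ = ε / K * ∑ i ∈ Finset.range n, |X (t (i + 1)) - X (t i)| ^ q := by rw [Finset.mul_sum]
    _ ≤ ε / K * K := by gcongr
    _ = ε := div_mul_cancel₀ _ hKpos.ne'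

lemma abs_exp_sub_one_sub_id_le_sq_mul_exp (x : ℝ) :
    |Real.exp x - 1 - x| ≤ x ^ 2 * Real.exp |x| := by
  have := Complex.norm_exp_sub_sum_le_norm_mul_exp (x : ℂ) 2
  simp only [Finset.sum_range_succ, Finset.sum_range_zero] at this
  norm_num at this
  rw [← sub_sub] at this
  exact_mod_cast this

/-- One step of the discretised computation of `d (y exp Γ)`. Here `e` is the increment of the
driver, and `r`, `r'` are the left-point errors of `Γ` and `y`. -/
lemma abs_mul_exp_sub_mul_exp_le {A B G a y₀ y₁ g₀ g₁ e r r' : ℝ} (hA : |a| ≤ A)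
    (hy₀ : |y₀| ≤ B) (hy₁ : |y₁| ≤ B) (hg₀ : |g₀| ≤ G) (hg₁ : |g₁| ≤ G)
    (hr : r = g₁ - g₀ - a * e) (hr' : r' = y₀ - y₁ - a * y₀ * e) (hr1 : |r| ≤ 1)
    (hr1' : |r'| ≤ 1) :
    |y₁ * Real.exp g₁ - y₀ * Real.exp g₀| ≤
      Real.exp G * (2 + B + 2 * A ^ 2 + 2 * (A * B) ^ 2 + B * Real.exp (2 * G) * (2 + 2 * A ^ 2)) *
        (|r| + |r'| + e ^ 2) := by
  have hA0 := (abs_nonneg _).trans hA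
  have hB0 := (abs_nonneg _).trans hy₀
  have hG0 := (abs_nonneg _).trans hg₀
  set d := g₁ - g₀ with hd
  set b := y₁ - y₀ with hb
  set ρ := Real.exp d - 1 - d with hρ
  have hsq : ∀ x : ℝ, |x| ≤ 1 → x ^ 2 ≤ |x| := fun x hx => by
    rw [← sq_abs]; nlinarith [abs_nonneg x]
  have ha2 : a ^ 2 ≤ A ^ 2 := sq_le_sq' (abs_le.1 hA).1 (abs_le.1 hA).2
  have hy2 : y₀ ^ 2 ≤ B ^ 2 := sq_le_sq' (abs_le.1 hy₀).1 (abs_le.1 hy₀).2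
  have hd2 : d ^ 2 ≤ 2 * A ^ 2 * e ^ 2 + 2 * |r| := by
    have h1 : d = a * e + r := by rw [hr]; ring
    have h2 : a ^ 2 * e ^ 2 ≤ A ^ 2 * e ^ 2 := by gcongr
    rw [h1]
    nlinarith [sq_nonneg (a * e - r), hsq r hr1]
  have hb2 : b ^ 2 ≤ 2 * (A * B) ^ 2 * e ^ 2 + 2 * |r'| := by
    have h1 : b = -(a * y₀ * e + r') := by rw [hr', hb]; ring
    have h2 : a ^ 2 * y₀ ^ 2 * e ^ 2 ≤ A ^ 2 * B ^ 2 * e ^ 2 := by gcongr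
    rw [h1]
    nlinarith [sq_nonneg (a * y₀ * e - r'), hsq r' hr1']
  have hdG : |d| ≤ 2 * G := by
    rw [hd]
    exact (abs_sub _ _).trans (by linarith)
  have hρ' : |ρ| ≤ d ^ 2 * Real.exp (2 * G) :=
    (abs_exp_sub_one_sub_id_le_sq_mul_exp d).trans (by gcongr)
  have hsplit : y₁ * Real.exp g₁ - y₀ * Real.exp g₀ =
      Real.exp g₀ * (-r' + y₀ * r + b * d + y₁ * ρ) := by
    have : Real.exp g₁ = Real.exp g₀ * Real.exp d := by rw [← Real.exp_add, hd]; ring_nf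
    rw [this, hr, hr', hρ, hb]
    ring
  have hbd : |b * d| ≤ (b ^ 2 + d ^ 2) / 2 := by
    rw [abs_le]
    constructor <;> nlinarith [sq_nonneg (b - d), sq_nonneg (b + d)]
  have h1 : |y₀ * r| ≤ B * |r| := by rw [abs_mul]; gcongr
  have h2 : |y₁ * ρ| ≤ B * (d ^ 2 * Real.exp (2 * G)) := by rw [abs_mul]; gcongr
  have h3 : B * (d ^ 2 * Real.exp (2 * G)) ≤
      B * ((2 * A ^ 2 * e ^ 2 + 2 * |r|) * Real.exp (2 * G)) := by gcongr
  rw [hsplit, abs_mul, Real.abs_exp, mul_assoc]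
  refine mul_le_mul (Real.exp_le_exp.2 ((le_abs_self _).trans hg₀)) ?_ (abs_nonneg _)
    (Real.exp_pos _).le
  have htri : |-r' + y₀ * r + b * d + y₁ * ρ| ≤ |r'| + |y₀ * r| + |b * d| + |y₁ * ρ| := by
    refine (abs_add_le _ _).trans (add_le_add_left ((abs_add_le _ _).trans
      (add_le_add_left ((abs_add_le _ _).trans ?_) _)) _)
    rw [abs_neg]
  set E := Real.exp (2 * G)
  have hE : 0 ≤ B * E := by positivity
  have p1 : 0 ≤ A ^ 2 := by positivity
  have p2 : 0 ≤ (A * B) ^ 2 := by positivity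
  have p3 := abs_nonneg r
  have p4 := abs_nonneg r'
  have p5 := sq_nonneg e
  have q1 := mul_nonneg p1 p3
  have q2 := mul_nonneg p1 p4
  have q3 := mul_nonneg p1 p5
  have q4 := mul_nonneg p2 p3
  have q5 := mul_nonneg p2 p4
  have q6 := mul_nonneg p2 p5
  have q7 := mul_nonneg hB0 p4
  have q8 := mul_nonneg hB0 p5
  have q9 := mul_nonneg hE p4
  have q10 := mul_nonneg hE p5
  have q11 := mul_nonneg hE q1
  have q12 := mul_nonneg hE q2
  have q13 := mul_nonneg hE q3
  linarith

/-- `y exp Γ` takes the same value at both ends of the interval. -/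
lemma mul_exp_eq_of_isYoungIntegral {T q : ℝ} (hT : 0 ≤ T) (hq0 : 0 < q) (hq2 : q < 2)
    {η α Γ y : ℝ → ℝ} (hη : ContinuousOn η (Set.Icc 0 T)) (hα : ContinuousOn α (Set.Icc 0 T))
    (hy : ContinuousOn y (Set.Icc 0 T)) (hfη : HasFinitePVar q 0 T η)
    (hΓ : ∀ t ∈ Set.Icc (0 : ℝ) T, IsYoungIntegral 0 t α η (Γ t))
    (hyeq : ∀ t ∈ Set.Icc (0 : ℝ) T, IsYoungIntegral 0 t (fun r => α r * y r) η (y 0 - y t)) :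
    y T * Real.exp (Γ T) = y 0 * Real.exp (Γ 0) := by
  obtain ⟨A, hA⟩ := isCompact_Icc.exists_bound_of_continuousOn hα
  obtain ⟨B, hB⟩ := isCompact_Icc.exists_bound_of_continuousOn hy
  obtain ⟨G, hG⟩ := isCompact_Icc.exists_bound_of_continuousOn
    (continuousOn_of_isYoungIntegral hT hΓ hA hη)
  simp only [Real.norm_eq_abs] at hA hB hG
  obtain ⟨K, hK⟩ : ∃ K, K = Real.exp G *
    (2 + B + 2 * A ^ 2 + 2 * (A * B) ^ 2 + B * Real.exp (2 * G) * (2 + 2 * A ^ 2)) := ⟨_, rfl⟩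
  have hK0 : 0 ≤ K := by
    have := (abs_nonneg _).trans (hB 0 ⟨le_rfl, hT⟩)
    rw [hK]
    positivity
  rw [← sub_eq_zero, ← abs_nonpos_iff]
  refine le_of_forall_pos_le_add fun κ hκ => ?_
  set ε := min 1 (κ / (3 * (K + 1))) with hε
  have hεpos : 0 < ε := by positivity
  obtain ⟨δ₁, hδ₁, H₁⟩ := sum_abs_leftPointError_le hT hΓ hεpos
  obtain ⟨δ₂, hδ₂, H₂⟩ := sum_abs_leftPointError_le (F := fun t => y 0 - y t) hT hyeq hεpos
  obtain ⟨δ₃, hδ₃, H₃⟩ := sum_sq_increments_le hq0 hq2 hη hfη hεpos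
  obtain ⟨n, t, tmono, t0, tn, tδ⟩ :=
    exists_fine_partition (show 0 < min δ₁ (min δ₂ δ₃) by positivity) hT
  have H₁ := H₁ n t tmono t0 (tn n le_rfl) fun i hi => (tδ i hi).trans_le (min_le_left _ _)
  have H₂ := H₂ n t tmono t0 (tn n le_rfl) fun i hi =>
    (tδ i hi).trans_le ((min_le_right _ _).trans (min_le_left _ _))
  have H₃ := H₃ n t tmono t0 tn fun i hi =>
    (tδ i hi).trans_le ((min_le_right _ _).trans (min_le_right _ _))
  have hmem : ∀ i ≤ n, t i ∈ Set.Icc 0 T := fun i hi =>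
    ⟨t0 ▸ tmono (Nat.zero_le i), tn n le_rfl ▸ tmono hi⟩
  have hone : ∀ f : ℕ → ℝ, ∑ i ∈ Finset.range n, |f i| ≤ ε → ∀ i ∈ Finset.range n, |f i| ≤ 1 :=
    fun f hf i hi => (Finset.single_le_sum (f := fun i => |f i|) (fun i _ => abs_nonneg _) hi).trans
      (hf.trans (min_le_left _ _))
  have htel := Finset.sum_range_sub (fun i => y (t i) * Real.exp (Γ (t i))) n
  rw [tn n le_rfl, t0] at htel
  rw [← htel, zero_add]
  calc |∑ i ∈ Finset.range n, (y (t (i + 1)) * Real.exp (Γ (t (i + 1))) -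
          y (t i) * Real.exp (Γ (t i)))|
      ≤ ∑ i ∈ Finset.range n, |y (t (i + 1)) * Real.exp (Γ (t (i + 1))) -
          y (t i) * Real.exp (Γ (t i))| := Finset.abs_sum_le_sum_abs _ _
    _ ≤ ∑ i ∈ Finset.range n, K * (|leftPointError α η Γ (t i) (t (i + 1))| +
          |leftPointError (fun r => α r * y r) η (fun t => y 0 - y t) (t i) (t (i + 1))| +
          (η (t (i + 1)) - η (t i)) ^ 2) := by
        refine Finset.sum_le_sum fun i hi => ?_
        have hin := Finset.mem_range.1 hi
        rw [hK]
        exact abs_mul_exp_sub_mul_exp_le (hA _ (hmem i hin.le)) (hB _ (hmem i hin.le))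
          (hB _ (hmem _ hin)) (hG _ (hmem i hin.le)) (hG _ (hmem _ hin)) rfl
          (by unfold leftPointError; ring) (hone _ H₁ i hi) (hone _ H₂ i hi)
    _ ≤ K * (ε + ε + ε) := by
        rw [← Finset.mul_sum, Finset.sum_add_distrib, Finset.sum_add_distrib]
        gcongr
    _ ≤ (K + 1) * (3 * (κ / (3 * (K + 1)))) := by
        have : ε ≤ κ / (3 * (K + 1)) := min_le_right _ _
        exact mul_le_mul (by linarith) (by linarith) (by linarith) (by linarith)
    _ = κ := by field_simp

/-- explicit solution of the linear Young ODE `dy_t = -α_t y_t dη_t`. -/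
theorem linear_young_ode_solution (T : ℝ) (hT : 0 < T) (p q : ℝ)
    (hq1 : 1 ≤ q) (hq2 : q < 2) (hp : 1 ≤ p) (hpq : 1 / p + 1 / q > 1)
    (η α Γ y : ℝ → ℝ)
    (hη : ContinuousOn η (Set.Icc 0 T)) (hα : ContinuousOn α (Set.Icc 0 T))
    (hy : ContinuousOn y (Set.Icc 0 T))
    (hfη : HasFinitePVar q 0 T η) (hfα : HasFinitePVar p 0 T α)
    (hfy : HasFinitePVar p 0 T y)
    (hΓ : ∀ t ∈ Set.Icc (0 : ℝ) T, IsYoungIntegral 0 t α η (Γ t))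
    (hyeq : ∀ t ∈ Set.Icc (0 : ℝ) T,
      IsYoungIntegral 0 t (fun r => α r * y r) η (y 0 - y t)) :
    ∀ t ∈ Set.Icc (0 : ℝ) T, y t = y 0 * Real.exp (-Γ t) := by
  intro t ht
  have hsub : Set.Icc 0 t ⊆ Set.Icc 0 T := Set.Icc_subset_Icc_right ht.2
  have h := mul_exp_eq_of_isYoungIntegral ht.1 (zero_lt_one.trans_le hq1) hq2 (hη.mono hsub)
    (hα.mono hsub) (hy.mono hsub) (hfη.of_le (zero_le_one.trans hq1) ht.2)
    (fun s hs => hΓ s (hsub hs)) (fun s hs => hyeq s (hsub hs))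
  have hΓ0 : Γ 0 = 0 := (hΓ 0 ⟨le_rfl, hT.le⟩).eq_zero_of_refl
  rw [hΓ0, Real.exp_zero, mul_one] at h
  rw [← h, mul_assoc, ← Real.exp_add, add_neg_cancel, Real.exp_zero, mul_one]
end
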